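/- ψ(−1/8) = −γ + 8 + (1 + √2)·(π/2) − 4·ln 2 − √2·ln(1 + √2), where ψ is the digamma function and γ is the Euler–Mascheroni constant. -/

import Mathlib

noncomputable def digamma (x : ℝ) : ℝ := deriv Real.Gamma x / Real.Gamma x

/-!
The bounds `log x - 1 / x ≤ ψ x ≤ log x`, which are the log-convexity of `Γ` combined with the
functional equation, give `ψ (n + 1) - ψ (n + x) → 0` and hence the series
`ψ x + γ = ∑ (1 / (k + 1) - 1 / (k + x))`. Writing each reciprocal as an integral of a power of `t`
over `[0, 1]` turns it into Gauss's integral, and `t = u ^ 8` makes the integrand rational for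
`x = 7 / 8`.
-/

open Real Filter Topology Set MeasureTheory

theorem digamma_one : digamma 1 = -eulerMascheroniConstant := by
  rw [digamma, hasDerivAt_Gamma_one.deriv, Gamma_one, div_one]

theorem digamma_add_one {x : ℝ} (hx : ∀ m : ℕ, x ≠ -m) :
    digamma (x + 1) = digamma x + 1 / x := by
  have hx0 : x ≠ 0 := by simpa using hx 0
  have hfe : (fun y => Gamma (y + 1)) =ᶠ[𝓝 x] fun y => y * Gamma y := by
    filter_upwards [eventually_ne_nhds hx0] with y hy using Gamma_add_one hy
  calc digamma (x + 1) = logDeriv (fun y => Gamma (y + 1)) x := by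
        rw [digamma, logDeriv_apply, deriv_comp_add_const]
    _ = logDeriv (fun y => y * Gamma y) x := (logDeriv_congr_nhds hfe).eq_of_nhds
    _ = 1 / x + digamma x := by
        rw [logDeriv_mul x hx0 (Gamma_ne_zero hx) differentiableAt_fun_id
          (differentiableAt_Gamma hx), logDeriv_id', logDeriv_apply, digamma]
    _ = digamma x + 1 / x := add_comm _ _

theorem digamma_add_natCast {x : ℝ} (hx : ∀ m : ℕ, x ≠ -m) (n : ℕ) :
    digamma (x + n) = digamma x + ∑ k ∈ Finset.range n, 1 / (x + k) := by
  induction n with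
  | zero => simp
  | succ n ih =>
    have hxn (m : ℕ) : x + n ≠ -m := fun h => hx (n + m) (by push_cast; linarith)
    rw [Nat.cast_succ, Finset.sum_range_succ, ← add_assoc, ← add_assoc, ← ih, digamma_add_one hxn]

theorem ne_neg_natCast_of_pos {x : ℝ} (hx : 0 < x) (m : ℕ) : x ≠ -m :=
  ((neg_nonpos.2 m.cast_nonneg).trans_lt hx).ne'

theorem hasDerivAt_log_Gamma {x : ℝ} (hx : ∀ m : ℕ, x ≠ -m) :
    HasDerivAt (log ∘ Gamma) (digamma x) x :=
  (differentiableAt_Gamma hx).hasDerivAt.log (Gamma_ne_zero hx)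

theorem slope_log_Gamma_add_one {x : ℝ} (hx : 0 < x) :
    slope (log ∘ Gamma) x (x + 1) = log x := by
  rw [slope_def_field, Function.comp_apply, Function.comp_apply, Gamma_add_one hx.ne',
    log_mul hx.ne' (Gamma_pos_of_pos hx).ne']
  ring

theorem digamma_le_log {x : ℝ} (hx : 0 < x) : digamma x ≤ log x :=
  slope_log_Gamma_add_one hx ▸ convexOn_log_Gamma.le_slope_of_hasDerivAt hx
    (add_pos hx one_pos) (lt_add_one x) (hasDerivAt_log_Gamma (ne_neg_natCast_of_pos hx))

theorem log_le_digamma_add_one {x : ℝ} (hx : 0 < x) : log x ≤ digamma (x + 1) :=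
  have hx1 : 0 < x + 1 := add_pos hx one_pos
  slope_log_Gamma_add_one hx ▸ convexOn_log_Gamma.slope_le_of_hasDerivAt hx
    hx1 (lt_add_one x) (hasDerivAt_log_Gamma (ne_neg_natCast_of_pos hx1))

theorem log_sub_one_div_le_digamma {x : ℝ} (hx : 0 < x) : log x - 1 / x ≤ digamma x := by
  rw [sub_le_iff_le_add, ← digamma_add_one (ne_neg_natCast_of_pos hx)]
  exact log_le_digamma_add_one hx

theorem tendsto_digamma_sub_log : Tendsto (fun x => digamma x - log x) atTop (𝓝 0) := by
  have hlower : Tendsto (fun x : ℝ => -(1 / x)) atTop (𝓝 0) := by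
    simpa using (tendsto_inv_atTop_zero (𝕜 := ℝ)).neg
  refine tendsto_of_tendsto_of_tendsto_of_le_of_le' hlower tendsto_const_nhds ?_ ?_
  · filter_upwards [eventually_gt_atTop 0] with x hx
    linarith [log_sub_one_div_le_digamma hx]
  · filter_upwards [eventually_gt_atTop 0] with x hx using sub_nonpos.2 (digamma_le_log hx)

theorem tendsto_digamma_add_sub_log (a : ℝ) :
    Tendsto (fun x => digamma (x + a) - log x) atTop (𝓝 0) := by
  simpa using (tendsto_digamma_sub_log.comp (tendsto_atTop_add_const_right _ a tendsto_id)).add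
    (tendsto_log_comp_add_sub_log a)

theorem summable_one_div_add_natCast_sub {x y : ℝ} (hx : ∀ m : ℕ, x ≠ -m) (hy : ∀ m : ℕ, y ≠ -m) :
    Summable fun k : ℕ => 1 / (x + k) - 1 / (y + k) := by
  have hsq (a : ℝ) : Summable fun k : ℕ => |1 / (a + k)| ^ 2 := by
    refine ((summable_one_div_nat_add_rpow a 2).2 one_lt_two).congr fun k => ?_
    rw [rpow_two, abs_div, abs_one, div_pow, one_pow, add_comm]
  have hprod : Summable fun k : ℕ => 1 / (x + k) * (1 / (y + k)) := by
    refine ((hsq x).add (hsq y)).of_norm_bounded fun k => ?_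
    rw [norm_mul, norm_eq_abs, norm_eq_abs]
    have hnonneg : 0 ≤ |1 / (x + k)| * |1 / (y + k)| := by positivity
    linarith [two_mul_le_add_sq |1 / (x + k)| |1 / (y + k)|]
  refine (hprod.mul_left (y - x)).congr fun k => ?_
  have hxk : x + k ≠ 0 := fun h => hx k (eq_neg_of_add_eq_zero_left h)
  have hyk : y + k ≠ 0 := fun h => hy k (eq_neg_of_add_eq_zero_left h)
  field_simp
  ring

theorem hasSum_digamma {x : ℝ} (hx : ∀ m : ℕ, x ≠ -m) :
    HasSum (fun k : ℕ => 1 / (1 + k : ℝ) - 1 / (x + k)) (digamma x + eulerMascheroniConstant) := by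
  have hone : ∀ m : ℕ, (1 : ℝ) ≠ -m := ne_neg_natCast_of_pos one_pos
  rw [(summable_one_div_add_natCast_sub hone hx).hasSum_iff_tendsto_nat]
  have hdiff : Tendsto (fun n : ℕ => digamma (n + 1) - digamma (n + x)) atTop (𝓝 0) := by
    simpa [Function.comp_def] using ((tendsto_digamma_add_sub_log 1).sub
      (tendsto_digamma_add_sub_log x)).comp tendsto_natCast_atTop_atTop
  have hpartial (n : ℕ) : ∑ k ∈ Finset.range n, (1 / (1 + k : ℝ) - 1 / (x + k)) =
      digamma (n + 1) - digamma (n + x) + (digamma x + eulerMascheroniConstant) := by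
    rw [Finset.sum_sub_distrib, add_comm (n : ℝ) 1, add_comm (n : ℝ) x,
      digamma_add_natCast hone, digamma_add_natCast hx, digamma_one]
    ring
  simpa only [hpartial, zero_add] using hdiff.add_const (digamma x + eulerMascheroniConstant)

theorem intervalIntegrable_rpow_sub_one {a c d : ℝ} (ha : 0 < a) :
    IntervalIntegrable (fun t : ℝ => t ^ (a - 1)) volume c d :=
  intervalIntegral.intervalIntegrable_rpow' (by linarith)

theorem integral_rpow_sub_one_sub_rpow_sub_one {a b : ℝ} (ha : 0 < a) (hb : 0 < b) :
    ∫ t in (0 : ℝ)..1, (t ^ (a - 1) - t ^ (b - 1)) = 1 / a - 1 / b := by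
  have hpow {c : ℝ} (hc : 0 < c) : ∫ t in (0 : ℝ)..1, t ^ (c - 1) = 1 / c := by
    rw [integral_rpow (Or.inl (by linarith)), sub_add_cancel, one_rpow, zero_rpow hc.ne', sub_zero]
  rw [intervalIntegral.integral_sub (intervalIntegrable_rpow_sub_one ha)
    (intervalIntegrable_rpow_sub_one hb), hpow ha, hpow hb]

theorem integral_abs_rpow_sub_one_sub_rpow_sub_one {a b : ℝ} (ha : 0 < a) (hb : 0 < b) :
    ∫ t in (0 : ℝ)..1, |t ^ (a - 1) - t ^ (b - 1)| = |1 / a - 1 / b| := by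
  wlog hab : a ≤ b generalizing a b
  · simpa only [abs_sub_comm] using this hb ha (le_of_not_ge hab)
  rw [abs_of_nonneg (sub_nonneg.2 (one_div_le_one_div_of_le ha hab)),
    ← integral_rpow_sub_one_sub_rpow_sub_one ha hb]
  refine intervalIntegral.integral_congr_Ioo_of_le zero_le_one fun t ht => abs_of_nonneg ?_
  exact sub_nonneg.2 (rpow_le_rpow_of_exponent_ge ht.1 ht.2.le (by linarith))

theorem hasSum_rpow_add_natCast_sub_one (a : ℝ) {t : ℝ} (ht : t ∈ Ioo (0 : ℝ) 1) :
    HasSum (fun k : ℕ => t ^ (a + k - 1)) (t ^ (a - 1) / (1 - t)) := by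
  refine ((hasSum_geometric_of_lt_one ht.1.le ht.2).mul_left (t ^ (a - 1))).congr_fun fun k => ?_
  rw [← rpow_natCast, ← rpow_add ht.1]
  ring_nf

theorem digamma_eq_integral {x : ℝ} (hx : 0 < x) :
    digamma x = -eulerMascheroniConstant + ∫ t in (0 : ℝ)..1, (1 - t ^ (x - 1)) / (1 - t) := by
  have hone (k : ℕ) : (0 : ℝ) < 1 + k := by positivity
  have hpos (k : ℕ) : 0 < x + k := by positivity
  have hseries := hasSum_digamma (ne_neg_natCast_of_pos hx)
  have hintegrable (k : ℕ) :
      IntegrableOn (fun t : ℝ => t ^ (1 + k - 1 : ℝ) - t ^ (x + k - 1)) (Ioc 0 1) :=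
    ((intervalIntegrable_rpow_sub_one (hone k)).sub (intervalIntegrable_rpow_sub_one (hpos k))).1
  have hsummable : Summable fun k : ℕ =>
      ∫ t in Ioc (0 : ℝ) 1, ‖t ^ (1 + k - 1 : ℝ) - t ^ (x + k - 1)‖ := by
    simpa only [norm_eq_abs, ← intervalIntegral.integral_of_le zero_le_one,
      integral_abs_rpow_sub_one_sub_rpow_sub_one (hone _) (hpos _)] using hseries.summable.abs
  have hinterchange : HasSum (fun k : ℕ => 1 / (1 + k : ℝ) - 1 / (x + k))
      (∫ t in (0 : ℝ)..1, ∑' k : ℕ, (t ^ (1 + k - 1 : ℝ) - t ^ (x + k - 1))) := by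
    simpa only [← intervalIntegral.integral_of_le zero_le_one,
      integral_rpow_sub_one_sub_rpow_sub_one (hone _) (hpos _)] using
      hasSum_integral_of_summable_integral_norm hintegrable hsummable
  have hgeom : ∀ t ∈ Ioo (0 : ℝ) 1, ∑' k : ℕ, (t ^ (1 + k - 1 : ℝ) - t ^ (x + k - 1)) =
      (1 - t ^ (x - 1)) / (1 - t) := fun t ht => by
    rw [((hasSum_rpow_add_natCast_sub_one 1 ht).sub
      (hasSum_rpow_add_natCast_sub_one x ht)).tsum_eq, sub_self, rpow_zero, sub_div]
  rw [← intervalIntegral.integral_congr_Ioo_of_le zero_le_one hgeom, ← hseries.unique hinterchange]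
  ring

theorem integral_comp_rpow_zero_one {E : Type*} [NormedAddCommGroup E] [NormedSpace ℝ E]
    (g : ℝ → E) {b : ℝ} (hb : 0 < b) :
    ∫ u in (0 : ℝ)..1, (b * u ^ (b - 1)) • g (u ^ b) = ∫ t in (0 : ℝ)..1, g t := by
  have hsub : Ioc (0 : ℝ) 1 ⊆ Ioi 0 := fun t ht => ht.1
  rw [intervalIntegral.integral_of_le zero_le_one, intervalIntegral.integral_of_le zero_le_one,
    ← inter_eq_right.2 hsub, ← setIntegral_indicator measurableSet_Ioc,
    ← setIntegral_indicator measurableSet_Ioc,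
    ← integral_comp_rpow_Ioi_of_pos (g := (Ioc 0 1).indicator g) hb]
  refine setIntegral_congr_fun measurableSet_Ioi fun u hu => ?_
  have hle : u ^ b ≤ 1 ↔ u ≤ 1 := by
    simpa only [one_rpow] using rpow_le_rpow_iff (le_of_lt hu) zero_le_one hb
  have hmem : u ^ b ∈ Ioc (0 : ℝ) 1 ↔ u ∈ Ioc (0 : ℝ) 1 :=
    and_congr (iff_of_true (rpow_pos_of_pos hu b) hu) hle
  by_cases h : u ∈ Ioc (0 : ℝ) 1
  · simp only [indicator_of_mem h, indicator_of_mem (hmem.2 h)]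
  · simp only [indicator_of_notMem h, indicator_of_notMem (mt hmem.1 h), smul_zero]

theorem digamma_div_eq_integral {a b : ℝ} (ha : 0 < a) (hb : 0 < b) :
    digamma (a / b) = -eulerMascheroniConstant +
      ∫ u in (0 : ℝ)..1, b * (u ^ (b - 1) - u ^ (a - 1)) / (1 - u ^ b) := by
  rw [digamma_eq_integral (div_pos ha hb), ← integral_comp_rpow_zero_one _ hb]
  congr 1
  refine intervalIntegral.integral_congr_Ioo_of_le zero_le_one fun u hu => ?_
  have hexp : u ^ (b - 1) * (u ^ b) ^ (a / b - 1) = u ^ (a - 1) := by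
    rw [← rpow_mul hu.1.le, ← rpow_add hu.1]
    congr 1
    field_simp
    ring
  simp only [smul_eq_mul, ← hexp]
  ring

theorem intervalIntegrable_pow_div_one_add_pow (m n : ℕ) {a b : ℝ} (ha : 0 ≤ a) (hb : 0 ≤ b) :
    IntervalIntegrable (fun u : ℝ => u ^ m / (1 + u ^ n)) volume a b := by
  refine ContinuousOn.intervalIntegrable (ContinuousOn.div (by fun_prop) (by fun_prop) ?_)
  intro u hu
  have hu0 : 0 ≤ u := (le_min ha hb).trans hu.1
  positivity

theorem integral_pow_div_one_add_pow_succ (n : ℕ) :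
    ∫ u in (0 : ℝ)..1, u ^ n / (1 + u ^ (n + 1)) = log 2 / (n + 1) := by
  have hderiv : ∀ u ∈ uIcc (0 : ℝ) 1,
      HasDerivAt (fun u => log (1 + u ^ (n + 1)) / (n + 1)) (u ^ n / (1 + u ^ (n + 1))) u := by
    intro u hu
    rw [uIcc_of_le zero_le_one] at hu
    have hne : 1 + u ^ (n + 1) ≠ 0 := (add_pos_of_pos_of_nonneg one_pos (pow_nonneg hu.1 _)).ne'
    refine ((((hasDerivAt_pow (n + 1) u).const_add 1).log hne).div_const _).congr_deriv ?_
    rw [Nat.add_sub_cancel]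
    push_cast
    field_simp
  rw [intervalIntegral.integral_eq_sub_of_hasDerivAt hderiv
    (intervalIntegrable_pow_div_one_add_pow _ _ le_rfl zero_le_one)]
  simp only [one_pow, one_add_one_eq_two, zero_pow n.succ_ne_zero, add_zero, log_one, zero_div,
    sub_zero]

theorem one_add_mul_add_sq_pos {s : ℝ} (hs : s ^ 2 < 4) (u : ℝ) : 0 < 1 + s * u + u ^ 2 := by
  nlinarith [sq_nonneg (u + s / 2)]

theorem continuous_div_one_add_mul_add_sq {s : ℝ} (hs : s ^ 2 < 4) :
    Continuous fun u : ℝ => u / (1 + s * u + u ^ 2) :=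
  Continuous.div (by fun_prop) (by fun_prop) fun u => (one_add_mul_add_sq_pos hs u).ne'

-- For `s = ± √2` the denominators are the two real quadratic factors of `1 + u ^ 4`.
theorem integral_div_one_add_mul_add_sq {s : ℝ} (hs : s ^ 2 = 2) :
    ∫ u in (0 : ℝ)..1, u / (1 + s * u + u ^ 2) = log (2 + s) / 2 - arctan (1 + s) + π / 4 := by
  have hs4 : s ^ 2 < 4 := by linarith
  have hderiv (u : ℝ) : HasDerivAt
      (fun u => log (1 + s * u + u ^ 2) / 2 - arctan (1 + s * u)) (u / (1 + s * u + u ^ 2)) u := by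
    have hne : 1 + s * u + u ^ 2 ≠ 0 := (one_add_mul_add_sq_pos hs4 u).ne'
    have hsq : 1 + (1 + s * u) ^ 2 = 2 * (1 + s * u + u ^ 2) := by linear_combination u ^ 2 * hs
    have hlin : HasDerivAt (fun u => 1 + s * u) s u := (hasDerivAt_const_mul s).const_add 1
    refine ((((hlin.add (hasDerivAt_pow 2 u)).log hne).div_const 2).sub
      hlin.arctan).congr_deriv ?_
    rw [hsq, Pi.add_apply]
    field_simp
    ring
  have hend : 1 + s * 1 + 1 ^ 2 = 2 + s := by ring
  rw [intervalIntegral.integral_eq_sub_of_hasDerivAt (fun u _ => hderiv u)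
    ((continuous_div_one_add_mul_add_sq hs4).intervalIntegrable 0 1), hend]
  simp only [mul_one, mul_zero, add_zero, zero_pow two_ne_zero, log_one, arctan_one]
  ring

theorem arctan_one_sub_sqrt_two : arctan (1 - √2) = arctan (1 + √2) - π / 2 := by
  have hinv : √2 - 1 = (1 + √2)⁻¹ :=
    eq_inv_of_mul_eq_one_left (by linear_combination sq_sqrt (zero_le_two (α := ℝ)))
  rw [← neg_sub, arctan_neg, hinv, arctan_inv_of_pos (by positivity), neg_sub]

theorem log_two_add_sqrt_two : log (2 + √2) = log (2 - √2) + 2 * log (1 + √2) := by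
  have hlt : √2 < 2 := (sqrt_lt' zero_lt_two).2 (by norm_num)
  have hmul : 2 + √2 = (2 - √2) * (1 + √2) ^ 2 := by
    linear_combination √2 * sq_sqrt (zero_le_two (α := ℝ))
  rw [hmul, log_mul (sub_pos.2 hlt).ne' (by positivity), log_pow, Nat.cast_ofNat]

theorem sq_div_one_add_pow_four_eq (u : ℝ) :
    u ^ 2 / (1 + u ^ 4) =
      √2 / 4 * (u / (1 + -√2 * u + u ^ 2) - u / (1 + √2 * u + u ^ 2)) := by
  have hs : √2 ^ 2 = 2 := sq_sqrt zero_le_two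
  have hplus : 1 + √2 * u + u ^ 2 ≠ 0 := (one_add_mul_add_sq_pos (by linarith) u).ne'
  have hminus : 1 + -√2 * u + u ^ 2 ≠ 0 :=
    (one_add_mul_add_sq_pos (by rw [neg_sq]; linarith) u).ne'
  have hfactor : 1 + u ^ 4 = (1 + -√2 * u + u ^ 2) * (1 + √2 * u + u ^ 2) := by
    linear_combination u ^ 2 * hs
  rw [hfactor, div_sub_div _ _ hminus hplus, mul_div_assoc']
  congr 1
  linear_combination -u ^ 2 / 2 * hs

theorem integral_sq_div_one_add_pow_four :
    ∫ u in (0 : ℝ)..1, u ^ 2 / (1 + u ^ 4) = √2 / 4 * (π / 2 - log (1 + √2)) := by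
  have hplus : √2 ^ 2 = 2 := sq_sqrt zero_le_two
  have hminus : (-√2) ^ 2 = 2 := by rw [neg_sq, hplus]
  have hint {s : ℝ} (hs : s ^ 2 = 2) :
      IntervalIntegrable (fun u : ℝ => u / (1 + s * u + u ^ 2)) volume 0 1 :=
    (continuous_div_one_add_mul_add_sq (by linarith)).intervalIntegrable 0 1
  simp only [sq_div_one_add_pow_four_eq]
  rw [intervalIntegral.integral_const_mul,
    intervalIntegral.integral_sub (hint hminus) (hint hplus),
    integral_div_one_add_mul_add_sq hminus, integral_div_one_add_mul_add_sq hplus,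
    ← sub_eq_add_neg, ← sub_eq_add_neg, arctan_one_sub_sqrt_two, log_two_add_sqrt_two]
  ring

-- The summands keep the form `c * (u ^ m / (1 + u ^ n))` so that one integrability lemma applies.
theorem eight_mul_pow_seven_sub_pow_six_div_eq {u : ℝ} (hu : u ≠ 1) (hu' : u ≠ -1) :
    8 * (u ^ 7 - u ^ 6) / (1 - u ^ 8) =
      2 * (u ^ 0 / (1 + u ^ 2)) + 4 * (u ^ 2 / (1 + u ^ 4)) - 2 * (u ^ 0 / (1 + u ^ 1))
        - 2 * (u ^ 1 / (1 + u ^ 2)) - 4 * (u ^ 3 / (1 + u ^ 4)) := by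
  have hsub : 1 - u ≠ 0 := sub_ne_zero.2 hu.symm
  have hadd : 1 + u ≠ 0 := fun h => hu' (eq_neg_of_add_eq_zero_right h)
  have hfactor : 1 - u ^ 8 = (1 - u) * (1 + u) * (1 + u ^ 2) * (1 + u ^ 4) := by ring
  rw [hfactor, pow_one]
  field_simp
  ring

theorem integral_eight_mul_pow_seven_sub_pow_six_div :
    ∫ u in (0 : ℝ)..1, 8 * (u ^ 7 - u ^ 6) / (1 - u ^ 8) =
      (1 + √2) * (π / 2) - 4 * log 2 - √2 * log (1 + √2) := by
  have hint (m n : ℕ) (c : ℝ) :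
      IntervalIntegrable (fun u : ℝ => c * (u ^ m / (1 + u ^ n))) volume 0 1 :=
    (intervalIntegrable_pow_div_one_add_pow m n le_rfl zero_le_one).const_mul c
  have hfrac := fun u (hu : u ∈ Ioo (0 : ℝ) 1) =>
    eight_mul_pow_seven_sub_pow_six_div_eq hu.2.ne (by linarith [hu.1])
  rw [intervalIntegral.integral_congr_Ioo_of_le zero_le_one hfrac,
    intervalIntegral.integral_sub
      ((((hint 0 2 2).add (hint 2 4 4)).sub (hint 0 1 2)).sub (hint 1 2 2)) (hint 3 4 4),
    intervalIntegral.integral_sub (((hint 0 2 2).add (hint 2 4 4)).sub (hint 0 1 2)) (hint 1 2 2),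
    intervalIntegral.integral_sub ((hint 0 2 2).add (hint 2 4 4)) (hint 0 1 2),
    intervalIntegral.integral_add (hint 0 2 2) (hint 2 4 4)]
  have harctan : ∫ u in (0 : ℝ)..1, u ^ 0 / (1 + u ^ 2) = π / 4 := by
    simp only [pow_zero, integral_one_div_one_add_sq, arctan_one, arctan_zero, sub_zero]
  simp only [intervalIntegral.integral_const_mul, harctan, integral_sq_div_one_add_pow_four,
    integral_pow_div_one_add_pow_succ 0, integral_pow_div_one_add_pow_succ 1,
    integral_pow_div_one_add_pow_succ 3]
  push_cast
  ring

theorem digamma_seven_eighths :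
    digamma (7 / 8) = -eulerMascheroniConstant +
      ((1 + √2) * (π / 2) - 4 * log 2 - √2 * log (1 + √2)) := by
  rw [digamma_div_eq_integral (by norm_num) (by norm_num),
    ← integral_eight_mul_pow_seven_sub_pow_six_div]
  norm_num [rpow_ofNat]

theorem digamma_neg_one_eighth :
    digamma (-(1 / 8)) =
      -Real.eulerMascheroniConstant + 8 + (1 + Real.sqrt 2) * (Real.pi / 2)
        - 4 * Real.log 2 - Real.sqrt 2 * Real.log (1 + Real.sqrt 2) := by
  have hpole (m : ℕ) : (-(1 / 8) : ℝ) ≠ -m := fun h => by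
    have h8 : (1 : ℝ) = 8 * m := by linarith
    have : 1 = 8 * m := by exact_mod_cast h8
    omega
  have hshift : digamma (7 / 8) = digamma (-(1 / 8)) + 1 / (-(1 / 8)) := by
    rw [← digamma_add_one hpole]
    norm_num
  linarith [digamma_seven_eighths]
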